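/- Let (B, A, i, e, l) be a cleft extension of abelian categories in which A and B have arbitrary coproducts and i preserves coproducts, let q : A → B be a left adjoint of i, and let B be an object of B. If l(B) is silting (respectively, partial silting) in A with respect to a projective presentation δ of l(B), then B is silting (respectively, partial silting) in B with respect to q(δ). -/

import Mathlib

open CategoryTheory Limits

universe v u₁ u₂

/-- For a morphism `σ : X ⟶ Y` in a category `C`, `DClass σ` is the class of objects `L`
such that `Hom_C(σ, L) : Hom_C(Y, L) → Hom_C(X, L)` is surjective. -/
def DClass {C : Type u₁} [Category.{v} C] {X Y : C} (σ : X ⟶ Y) (L : C) : Prop :=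
  Function.Surjective (fun g : Y ⟶ L => σ ≫ g)

/-- A class of objects of `C` is closed under coproducts if it contains the coproduct of any
family of its members. -/
def ClosedUnderCoproducts {C : Type u₁} [Category.{v} C] [HasCoproducts.{v} C]
    (P : C → Prop) : Prop :=
  ∀ (I : Type v) (f : I → C), (∀ j, P (f j)) → P (∐ f)

/-- `Gen X` is the class of epimorphic images of coproducts of copies of `X`. -/
def Gen {C : Type u₁} [Category.{v} C] [HasCoproducts.{v} C] (X L : C) : Prop :=
  ∃ (I : Type v) (p : (∐ fun _ : I => X) ⟶ L), Epi p

/-- Given a morphism `σ` occurring in a projective presentation `P₁ ⟶ P₀ ⟶ X ⟶ 0`, the object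
`X` is partial silting with respect to `σ` if `X ∈ D_σ` and `D_σ` is closed under coproducts. -/
def IsPartialSilting {C : Type u₁} [Category.{v} C] [HasCoproducts.{v} C]
    {P₁ P₀ : C} (σ : P₁ ⟶ P₀) (X : C) : Prop :=
  DClass σ X ∧ ClosedUnderCoproducts (DClass σ)

/-- Given a morphism `σ` occurring in a projective presentation `P₁ ⟶ P₀ ⟶ X ⟶ 0`, the object
`X` is silting with respect to `σ` if `Gen X = D_σ`. -/
def IsSilting {C : Type u₁} [Category.{v} C] [HasCoproducts.{v} C]
    {P₁ P₀ : C} (σ : P₁ ⟶ P₀) (X : C) : Prop :=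
  ∀ L : C, Gen X L ↔ DClass σ L

/-!
The adjunction `q ⊣ i` turns `D_{q(δ)}` into the preimage of `D_δ` under `i`. Silting therefore
reduces to `Gen B = i⁻¹ (Gen (l B))`: the functor `i` preserves coproducts and epimorphisms and
`i B` is a quotient of `l B`, while `q` preserves coproducts and epimorphisms, `q (l B) ≅ B`, and
`q (i L) ⟶ L` is an epimorphism since `i` is faithful. For partial silting, `i B` lies in `D_δ` as a
quotient of `l B` because the source of `δ` is projective.
-/

namespace DClass

variable {C : Type u₁} [Category.{v} C] {X Y L M : C} {σ : X ⟶ Y}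

theorem of_surjective_comp (h : DClass σ L) (p : L ⟶ M)
    (hp : Function.Surjective fun f : X ⟶ L => f ≫ p) : DClass σ M := by
  intro f
  obtain ⟨f', rfl⟩ := hp f
  obtain ⟨g, rfl⟩ := h f'
  exact ⟨g ≫ p, (Category.assoc _ _ _).symm⟩

theorem of_iso (h : DClass σ L) (φ : L ≅ M) : DClass σ M :=
  h.of_surjective_comp φ.hom fun f => ⟨f ≫ φ.inv, by simp⟩

theorem of_epi [Projective X] (h : DClass σ L) (p : L ⟶ M) [Epi p] : DClass σ M :=
  h.of_surjective_comp p fun f => ⟨Projective.factorThru f p, Projective.factorThru_comp f p⟩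

end DClass

namespace Gen

variable {C : Type u₁} [Category.{v} C] [HasCoproducts.{v} C] {X Y L M : C}

theorem of_epi_target (h : Gen X L) (p : L ⟶ M) [Epi p] : Gen X M := by
  obtain ⟨I, r, _⟩ := h
  exact ⟨I, r ≫ p, inferInstance⟩

theorem of_epi_generator (h : Gen Y L) (p : X ⟶ Y) [Epi p] : Gen X L := by
  obtain ⟨I, r, _⟩ := h
  exact ⟨I, Limits.Sigma.map (fun _ => p) ≫ r, inferInstance⟩

theorem map {D : Type u₂} [Category.{v} D] [HasCoproducts.{v} D] (F : C ⥤ D)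
    [∀ J : Type v, PreservesColimitsOfShape (Discrete J) F] [F.PreservesEpimorphisms]
    (h : Gen X L) : Gen (F.obj X) (F.obj L) := by
  obtain ⟨I, r, _⟩ := h
  exact ⟨I, (PreservesCoproduct.iso F fun _ : I => X).inv ≫ F.map r, inferInstance⟩

end Gen

section Adjunction

variable {A : Type u₁} {B : Type u₂} [Category.{v} A] [Category.{v} B]

theorem epi_homEquiv_symm_of_epi {F : B ⥤ A} {G : A ⥤ B} [G.Faithful] (adj : F ⊣ G)
    {X : B} {Y : A} (f : X ⟶ G.obj Y) [Epi f] : Epi ((adj.homEquiv X Y).symm f) := by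
  have : F.PreservesEpimorphisms := F.preservesEpimorphisms_of_adjunction adj
  rw [adj.homEquiv_counit]
  infer_instance

variable {q : A ⥤ B} {i : B ⥤ A}

theorem dClass_map_iff (adjq : q ⊣ i) {X Y : A} (σ : X ⟶ Y) (L : B) :
    DClass (q.map σ) L ↔ DClass σ (i.obj L) := by
  have comp_conj : (fun g : Y ⟶ i.obj L => σ ≫ g) ∘ adjq.homEquiv Y L =
      adjq.homEquiv X L ∘ fun g => q.map σ ≫ g :=
    funext fun g => (adjq.homEquiv_naturality_left σ g).symm
  unfold DClass
  rw [← (adjq.homEquiv Y L).surjective_comp, comp_conj, (adjq.homEquiv X L).comp_surjective]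

variable [HasCoproducts.{v} A] [HasCoproducts.{v} B]
  [∀ J : Type v, PreservesColimitsOfShape (Discrete J) i]

theorem closedUnderCoproducts_dClass_map (adjq : q ⊣ i) {X Y : A} {σ : X ⟶ Y}
    (h : ClosedUnderCoproducts (DClass σ)) : ClosedUnderCoproducts (DClass (q.map σ)) := by
  intro I f hf
  have mem_coproduct : DClass σ (∐ fun j => i.obj (f j)) :=
    h I _ fun j => (dClass_map_iff adjq σ (f j)).1 (hf j)
  exact (dClass_map_iff adjq σ _).2 (mem_coproduct.of_iso (PreservesCoproduct.iso i f).symm)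

theorem gen_iff_gen_obj [i.Faithful] [i.PreservesEpimorphisms] (adjq : q ⊣ i) {X : A} {Y : B}
    (p : X ⟶ i.obj Y) [Epi p] (s : Y ⟶ q.obj X) [Epi s] (L : B) :
    Gen Y L ↔ Gen X (i.obj L) := by
  have := adjq.leftAdjoint_preservesColimits
  have : q.PreservesEpimorphisms := q.preservesEpimorphisms_of_adjunction adjq
  exact ⟨fun h => (h.map i).of_epi_generator p,
    fun h => ((h.map q).of_epi_target (adjq.counit.app L)).of_epi_generator s⟩

theorem IsSilting.map_leftAdjoint [i.Faithful] [i.PreservesEpimorphisms] (adjq : q ⊣ i)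
    {P₁ P₀ X : A} {σ : P₁ ⟶ P₀} (h : IsSilting σ X) {Y : B}
    (p : X ⟶ i.obj Y) [Epi p] (s : Y ⟶ q.obj X) [Epi s] : IsSilting (q.map σ) Y := fun L =>
  calc
    Gen Y L ↔ Gen X (i.obj L) := gen_iff_gen_obj adjq p s L
    _ ↔ DClass σ (i.obj L) := h (i.obj L)
    _ ↔ DClass (q.map σ) L := (dClass_map_iff adjq σ L).symm

theorem IsPartialSilting.map_leftAdjoint (adjq : q ⊣ i) {P₁ P₀ X : A} [Projective P₁]
    {σ : P₁ ⟶ P₀} (h : IsPartialSilting σ X) {Y : B} (p : X ⟶ i.obj Y) [Epi p] :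
    IsPartialSilting (q.map σ) Y :=
  ⟨(dClass_map_iff adjq σ Y).2 (h.1.of_epi p), closedUnderCoproducts_dClass_map adjq h.2⟩

end Adjunction

theorem stmt15_general {A : Type u₁} {B : Type u₂} [Category.{v} A] [Category.{v} B]
    [HasCoproducts.{v} A] [HasCoproducts.{v} B]
    (i : B ⥤ A) (e : A ⥤ B) (l : B ⥤ A) [e.Faithful]
    [∀ J : Type v, PreservesColimitsOfShape (Discrete J) i]
    (adj : l ⊣ e) (η : i ⋙ e ≅ 𝟭 B) (q : A ⥤ B) (adjq : q ⊣ i)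
    (Bo : B) {Q₁ Q₀ : A} (δ : Q₁ ⟶ Q₀) :
    (IsSilting δ (l.obj Bo) → IsSilting (q.map δ) Bo) ∧
    (Projective Q₁ → IsPartialSilting δ (l.obj Bo) → IsPartialSilting (q.map δ) Bo) := by
  have : i.Faithful := .of_comp_iso η
  have : (i ⋙ e).PreservesEpimorphisms := .of_iso η.symm
  have : i.PreservesEpimorphisms := Functor.preservesEpimorphisms_of_preserves_of_reflects i e
  let p : l.obj Bo ⟶ i.obj Bo := (adj.homEquiv Bo (i.obj Bo)).symm (η.inv.app Bo)
  have : Epi p := epi_homEquiv_symm_of_epi adj (η.inv.app Bo)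
  let lqIso : l ⋙ q ≅ 𝟭 B := ((adj.comp adjq).ofNatIsoRight η).leftAdjointUniq Adjunction.id
  exact ⟨fun h => h.map_leftAdjoint adjq p (lqIso.inv.app Bo),
    fun _ h => h.map_leftAdjoint adjq p⟩

/-- Let `(B, A, i, e, l)` be a cleft extension of abelian categories with
arbitrary coproducts in which `i` preserves coproducts, let `q : A ⥤ B` be a left adjoint of
`i`, and let `Bo` be an object of `B`. If `l(Bo)` is silting (resp. partial silting) in `A` with
respect to a projective presentation `Q₁ ⟶δ Q₀ ⟶π l(Bo) ⟶ 0`, then `Bo` is silting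
(resp. partial silting) in `B` with respect to `q(δ)`. -/
theorem stmt15 {A : Type u₁} {B : Type u₂} [Category.{v} A] [Category.{v} B]
    [Abelian A] [Abelian B] [EnoughProjectives A] [EnoughProjectives B]
    [HasCoproducts.{v} A] [HasCoproducts.{v} B]
    (i : B ⥤ A) (e : A ⥤ B) (l : B ⥤ A) [e.Faithful]
    [PreservesFiniteLimits e] [PreservesFiniteColimits e]
    [∀ J : Type v, PreservesColimitsOfShape (Discrete J) i]
    (adj : l ⊣ e) (η : i ⋙ e ≅ 𝟭 B)
    (q : A ⥤ B) (adjq : q ⊣ i)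
    (Bo : B) {Q₁ Q₀ : A} (hQ₁ : Projective Q₁) (hQ₀ : Projective Q₀)
    (δ : Q₁ ⟶ Q₀) (π : Q₀ ⟶ l.obj Bo) [Epi π]
    (w : δ ≫ π = 0) (hexact : (ShortComplex.mk δ π w).Exact) :
    (IsSilting δ (l.obj Bo) → IsSilting (q.map δ) Bo) ∧
    (IsPartialSilting δ (l.obj Bo) → IsPartialSilting (q.map δ) Bo) := by
  obtain ⟨silting, partialSilting⟩ := stmt15_general i e l adj η q adjq Bo δ
  exact ⟨silting, partialSilting hQ₁⟩
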